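/- Fix an integer n ≥ 1. Let R = ℂ[a₁,…,aₙ] be a polynomial ring in n variables over ℂ, let P = t^n + a₁ t^{n−1} + … + aₙ ∈ R[t] be the universal monic polynomial of degree n, and let Δ ∈ R be its discriminant, realized as the resultant Res(P, ∂P/∂t) of P with its t-derivative. Then the set {θ ∈ Der_ℂ(R, R) : θ(Δ) ∈ (Δ)} of ℂ-linear derivations of R sending Δ into the principal ideal generated by Δ is an R-submodule of the module of derivations which is a free R-module of rank n. -/

import Mathlib

open Polynomial

/-- The Sylvester matrix of two polynomials `p`, `q`, regarded as having degrees
`m` and `l` respectively: an `(l + m) × (l + m)` matrix whose first `l` rows are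
the shifted coefficient sequences of `p` (in decreasing order of degree) and whose
last `m` rows are the shifted coefficient sequences of `q`. -/
noncomputable def sylvesterMatrix {R : Type} [CommRing R] (p q : R[X]) (m l : ℕ) :
    Matrix (Fin (l + m)) (Fin (l + m)) R := fun i j =>
  if (i : ℕ) < l then
    if (i : ℕ) ≤ (j : ℕ) ∧ (j : ℕ) ≤ (i : ℕ) + m then p.coeff (m + i - j) else 0
  else
    if (i : ℕ) - l ≤ (j : ℕ) ∧ (j : ℕ) ≤ ((i : ℕ) - l) + l then
      q.coeff (l + ((i : ℕ) - l) - j)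
    else 0

/-- The resultant `Res(p, q)` of `p` (of degree `m`) and `q` (of degree `l`),
as the determinant of the Sylvester matrix. -/
noncomputable def resultant {R : Type} [CommRing R] (p q : R[X]) (m l : ℕ) : R :=
  (sylvesterMatrix p q m l).det

/-!
A vector field on the line induces the vector field `δ_g : P ↦ P' g mod P` on the space of monic
polynomials `P` of degree `n`. Since `δ_g - g ∂ₜ` maps `P` into `(P)`, it preserves the ideal
`(P, P')`, whose elements independent of `t` are the multiples of `Δ`; hence `δ_g` is logarithmic.
After adjoining the roots, the coefficient matrix of `δ_1, δ_t, …, δ_{t ^ (n - 1)}` is conjugate by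
a Vandermonde matrix to the diagonal matrix with entries `P'(root)`, so its determinant is `Δ` up to
a unit. As `Δ` is reduced, Saito's criterion makes these vector fields a basis of the logarithmic
ones. Both facts on `Δ` come from its being, up to sign, the square of the product of the
differences of the roots: a symmetric polynomial divisible by such a difference is divisible by its
square.
-/

namespace FreeDivisor

open MvPolynomial (pderiv rename)

section Saito

variable {σ K : Type*} [CommRing K]

theorem dvd_mul_derivation_of_associated {A : Type*} [CommRing A] [Algebra K A]
    (D : Derivation K A A) {f g c : A} (hfg : Associated f g) (h : f ∣ c * D f) :
    g ∣ c * D g := by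
  obtain ⟨u, rfl⟩ := hfg
  rw [Units.mul_right_dvd, D.leibniz, smul_eq_mul, smul_eq_mul, mul_add, mul_left_comm c (u : A)]
  exact dvd_add ((dvd_mul_right f _).mul_left c) (h.mul_left _)

variable (K) in
/-- The logarithmic derivations of `f`: those preserving the ideal `(f)`. -/
def logDerivation {A : Type*} [CommRing A] [Algebra K A] (f : A) :
    Submodule A (Derivation K A A) where
  carrier := {θ | f ∣ θ f}
  add_mem' hθ hη := dvd_add hθ hη
  zero_mem' := dvd_zero f
  smul_mem' a _ hθ := hθ.mul_left a

theorem mem_logDerivation {A : Type*} [CommRing A] [Algebra K A] {f : A}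
    {θ : Derivation K A A} : θ ∈ logDerivation K f ↔ f ∣ θ f :=
  Iff.rfl

/-- The coefficient matrix of a family of vector fields on affine space, as in Saito's
criterion: column `j` holds the coefficients of `δ j`. -/
noncomputable def saitoMatrix (δ : σ → Derivation K (MvPolynomial σ K) (MvPolynomial σ K)) :
    Matrix σ σ (MvPolynomial σ K) :=
  Matrix.of fun k j => δ j (MvPolynomial.X k)

theorem saitoMatrix_update [DecidableEq σ]
    (δ : σ → Derivation K (MvPolynomial σ K) (MvPolynomial σ K)) (i : σ)
    (θ : Derivation K (MvPolynomial σ K) (MvPolynomial σ K)) :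
    saitoMatrix (Function.update δ i θ) =
      (saitoMatrix δ).updateCol i fun k => θ (MvPolynomial.X k) := by
  ext k j : 2
  rcases eq_or_ne j i with rfl | hj
  · simp [saitoMatrix]
  · simp [saitoMatrix, hj]

variable [Fintype σ]

theorem derivation_aeval {S : Type*} [CommRing S] [Algebra K S] (D : Derivation K S S) (f : σ → S)
    (F : MvPolynomial σ K) :
    D (MvPolynomial.aeval f F) = ∑ k, MvPolynomial.aeval f (pderiv k F) * D (f k) := by
  classical
  induction F using MvPolynomial.induction_on with
  | C a => simp
  | add p q hp hq => simp only [map_add, hp, hq, add_mul, Finset.sum_add_distrib]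
  | mul_X p i hp =>
    simp [hp, Derivation.leibniz, Pi.single_apply, Finset.sum_add_distrib, add_mul, Finset.mul_sum,
      mul_assoc, apply_ite (MvPolynomial.aeval f), eq_comm (a := i)]

theorem derivation_eq_sum_pderiv (D : Derivation K (MvPolynomial σ K) (MvPolynomial σ K))
    (F : MvPolynomial σ K) : D F = ∑ k, pderiv k F * D (MvPolynomial.X k) := by
  simpa using derivation_aeval D MvPolynomial.X F

variable {δ : σ → Derivation K (MvPolynomial σ K) (MvPolynomial σ K)} {f : MvPolynomial σ K}

theorem saitoMatrix_mulVec (c : σ → MvPolynomial σ K) (k : σ) :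
    (saitoMatrix δ).mulVec c k = (∑ j, c j • δ j) (MvPolynomial.X k) := by
  have hsum := congrFun (map_sum Derivation.coeFnAddMonoidHom (fun j => c j • δ j) Finset.univ)
    (MvPolynomial.X k)
  rw [Finset.sum_apply] at hsum
  exact (Finset.sum_congr rfl fun j _ => mul_comm _ _).trans hsum.symm

variable [DecidableEq σ]

theorem dvd_det_saitoMatrix_mul_pderiv (hδ : ∀ j, δ j ∈ logDerivation K f) (k : σ) :
    f ∣ (saitoMatrix δ).det * pderiv k f := by
  let gradient : σ → MvPolynomial σ K := fun l => pderiv l f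
  have hgradient (j : σ) : f ∣ Matrix.vecMul gradient (saitoMatrix δ) j :=
    (mem_logDerivation.1 (hδ j)).trans (derivation_eq_sum_pderiv (δ j) f).dvd
  have hadjugate : (saitoMatrix δ).det * pderiv k f =
      Matrix.vecMul (Matrix.vecMul gradient (saitoMatrix δ)) (saitoMatrix δ).adjugate k := by
    simp [Matrix.vecMul_vecMul, Matrix.mul_adjugate, Matrix.vecMul_smul, gradient]
  rw [hadjugate]
  exact Finset.dvd_sum fun j _ => (hgradient j).mul_right _

variable [IsDomain K]

theorem linearIndependent_of_det_saitoMatrix_ne_zero (h : (saitoMatrix δ).det ≠ 0) :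
    LinearIndependent (MvPolynomial σ K) δ := by
  refine Fintype.linearIndependent_iff.2 fun c hc => congrFun ?_
  refine Matrix.eq_zero_of_mulVec_eq_zero h (funext fun k => ?_)
  rw [saitoMatrix_mulVec, hc, Derivation.zero_apply, Pi.zero_apply]

/-- Saito's criterion for the freeness of the divisor `f = 0`, when `f` is reduced in the sense
that its partial derivatives have no common annihilator modulo `f`. -/
theorem span_range_eq_logDerivation (hf : f ≠ 0)
    (hred : ∀ c, (∀ k, f ∣ c * pderiv k f) → f ∣ c) (hδ : ∀ j, δ j ∈ logDerivation K f)
    (hdet : Associated (saitoMatrix δ).det f) :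
    Submodule.span (MvPolynomial σ K) (Set.range δ) = logDerivation K f := by
  refine le_antisymm (Submodule.span_le.2 (Set.range_subset_iff.2 hδ)) fun θ hθ => ?_
  have hcramer (i : σ) :
      f ∣ (saitoMatrix δ).cramer (fun k => θ (MvPolynomial.X k)) i := by
    rw [Matrix.cramer_apply, ← saitoMatrix_update]
    refine hred _ (dvd_det_saitoMatrix_mul_pderiv fun j => ?_)
    rcases eq_or_ne j i with rfl | hj
    · rwa [Function.update_self]
    · rw [Function.update_of_ne hj]; exact hδ j
  choose c hc using fun i => hdet.dvd.trans (hcramer i)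
  have hdet_ne : (saitoMatrix δ).det ≠ 0 := hdet.ne_zero_iff.2 hf
  suffices ∑ i, c i • δ i = θ from
    this ▸ Submodule.sum_mem _ fun i _ =>
      Submodule.smul_mem _ _ (Submodule.subset_span ⟨i, rfl⟩)
  refine MvPolynomial.derivation_ext fun k => mul_left_cancel₀ hdet_ne ?_
  calc (saitoMatrix δ).det * (∑ i, c i • δ i) (MvPolynomial.X k)
      = (saitoMatrix δ).mulVec ((saitoMatrix δ).det • c) k := by
        rw [Matrix.mulVec_smul, Pi.smul_apply, saitoMatrix_mulVec, smul_eq_mul]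
    _ = (saitoMatrix δ).mulVec ((saitoMatrix δ).cramer fun k => θ (MvPolynomial.X k)) k :=
        congrArg (fun b => (saitoMatrix δ).mulVec b k) (funext hc).symm
    _ = (saitoMatrix δ).det * θ (MvPolynomial.X k) := by
        rw [Matrix.mulVec_cramer, Pi.smul_apply, smul_eq_mul]

end Saito

section Primes

variable {A : Type*} [CommRing A] [IsDomain A]

theorem prod_pow_dvd_of_prime {ι : Type*} {s : Finset ι} {p : ι → A} {a : A} (m : ℕ)
    (hp : ∀ i ∈ s, Prime (p i)) (hne : ∀ i ∈ s, ∀ j ∈ s, p i ∣ p j → i = j)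
    (ha : ∀ i ∈ s, p i ^ m ∣ a) : ∏ i ∈ s, p i ^ m ∣ a := by
  classical
  induction s using Finset.induction_on generalizing a with
  | empty => simp
  | insert i s hi ih =>
    obtain ⟨b, rfl⟩ := ha i (Finset.mem_insert_self i s)
    rw [Finset.prod_insert hi]
    simp only [Finset.forall_mem_insert] at hp hne ha
    refine mul_dvd_mul_left _ (ih hp.2 (fun j hj => (hne.2 j hj).2) fun j hj => ?_)
    refine (hp.2 j hj).pow_dvd_of_dvd_mul_left m (fun hji => ?_) (ha.2 j hj)
    exact hi ((hne.2 j hj).1 ((hp.2 j hj).dvd_of_dvd_pow hji) ▸ hj)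

theorem dvd_of_mul_sq_dvd_mul_derivation {K : Type*} [CommRing K] [Algebra K A]
    (D : Derivation K A A) {p q c : A} (hp : Prime p) (h2 : ¬ p ∣ 2) (hq : ¬ p ∣ q)
    (hD : ¬ p ∣ D p) (h : (p * q) ^ 2 ∣ c * D ((p * q) ^ 2)) : p ∣ c := by
  have hpq : p * q ≠ 0 := mul_ne_zero hp.ne_zero fun hq0 => hq (hq0 ▸ dvd_zero p)
  have hsq : c * D ((p * q) ^ 2) = p * q * (c * 2 * (p * D q + q * D p)) := by
    simp only [sq, D.leibniz, smul_eq_mul]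
    ring
  rw [hsq, sq, mul_dvd_mul_iff_left hpq] at h
  have hpc : p ∣ c * 2 * (q * D p) := by
    rw [← dvd_add_right ((dvd_mul_right p (D q)).mul_left (c * 2)), ← mul_add]
    exact (dvd_mul_right p q).trans h
  have hc2 : p ∣ c * 2 :=
    (hp.dvd_or_dvd hpc).resolve_right fun h => (hp.dvd_or_dvd h).elim hq hD
  exact (hp.dvd_or_dvd hc2).resolve_right h2

end Primes

section LinearForms

variable {σ K : Type*} [CommRing K] {i j : σ} {F : MvPolynomial σ K}

theorem X_sub_X_dvd_iff [DecidableEq σ] :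
    (MvPolynomial.X i - MvPolynomial.X j : MvPolynomial σ K) ∣ F ↔
      rename (Function.update id i j) F = 0 := by
  constructor
  · rintro ⟨G, rfl⟩
    rw [map_mul, map_sub, MvPolynomial.rename_X, MvPolynomial.rename_X, Function.update_self]
    rcases eq_or_ne j i with rfl | hji
    · rw [Function.update_self, sub_self, zero_mul]
    · rw [Function.update_of_ne hji, id_eq, sub_self, zero_mul]
  · intro hF
    let π := Ideal.Quotient.mkₐ K
      (Ideal.span {(MvPolynomial.X i - MvPolynomial.X j : MvPolynomial σ K)})
    have hπ : π.comp (rename (Function.update id i j)) = π := by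
      refine MvPolynomial.algHom_ext fun k => ?_
      rcases eq_or_ne k i with rfl | hk
      · simpa [π] using (Ideal.Quotient.eq.2 (Ideal.mem_span_singleton_self _)).symm
      · simp [hk]
    rw [← Ideal.mem_span_singleton, ← Ideal.Quotient.eq_zero_iff_mem]
    change π F = 0
    rw [← hπ, AlgHom.comp_apply, hF, map_zero]

theorem X_sub_X_dvd_sq [IsDomain K] (h2 : (2 : K) ≠ 0) (hij : i ≠ j) (hF : F.IsSymmetric)
    (h : (MvPolynomial.X i - MvPolynomial.X j : MvPolynomial σ K) ∣ F) :
    (MvPolynomial.X i - MvPolynomial.X j) ^ 2 ∣ F := by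
  classical
  obtain ⟨G, rfl⟩ := h
  have hne : (MvPolynomial.X i - MvPolynomial.X j : MvPolynomial σ K) ≠ 0 :=
    sub_ne_zero.2 fun h => hij (MvPolynomial.X_injective h)
  have hanti : rename (Equiv.swap i j) G = -G := by
    have hswap := hF (Equiv.swap i j)
    simp only [map_mul, map_sub, MvPolynomial.rename_X, Equiv.swap_apply_left,
      Equiv.swap_apply_right] at hswap
    exact mul_left_cancel₀ hne (by linear_combination -hswap)
  have hcomp : (Function.update id i j : σ → σ) ∘ Equiv.swap i j = Function.update id i j := by
    funext k
    rcases eq_or_ne k i with rfl | hki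
    · simp [hij.symm]
    · rcases eq_or_ne k j with rfl | hkj
      · simp [hki]
      · simp [Equiv.swap_apply_of_ne_of_ne hki hkj]
  have hG := congrArg (rename (Function.update id i j)) hanti
  rw [MvPolynomial.rename_rename, hcomp, map_neg, eq_neg_iff_add_eq_zero, ← two_mul] at hG
  have h2' : (2 : MvPolynomial σ K) ≠ 0 := by
    rw [← map_ofNat MvPolynomial.C 2]
    exact MvPolynomial.C_ne_zero.2 h2
  rw [sq]
  exact mul_dvd_mul_left _ (X_sub_X_dvd_iff.2 ((mul_eq_zero.1 hG).resolve_left h2'))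

theorem prime_X_sub_X [IsDomain K] (hij : i ≠ j) :
    Prime (MvPolynomial.X i - MvPolynomial.X j : MvPolynomial σ K) := by
  classical
  refine ⟨sub_ne_zero.2 fun h => hij (MvPolynomial.X_injective h), fun hu => ?_, fun F G h => ?_⟩
  · simpa using X_sub_X_dvd_iff.1 (hu.dvd (a := 1))
  · rwa [X_sub_X_dvd_iff, map_mul, mul_eq_zero, ← X_sub_X_dvd_iff, ← X_sub_X_dvd_iff] at h

theorem not_X_sub_X_dvd_two (h2 : (2 : K) ≠ 0) :
    ¬ (MvPolynomial.X i - MvPolynomial.X j : MvPolynomial σ K) ∣ 2 := by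
  classical
  rw [X_sub_X_dvd_iff, map_ofNat, ← map_ofNat MvPolynomial.C 2]
  exact MvPolynomial.C_ne_zero.2 h2

end LinearForms

section VandermondeProduct

variable {σ K : Type*} [LinearOrder σ] [CommRing K]

theorem eq_of_X_sub_X_dvd_X_sub_X [Nontrivial K] {i j k l : σ} (hij : i < j) (hkl : k < l)
    (h : (MvPolynomial.X j - MvPolynomial.X i : MvPolynomial σ K) ∣
      MvPolynomial.X l - MvPolynomial.X k) : (i, j) = (k, l) := by
  rw [X_sub_X_dvd_iff, map_sub, MvPolynomial.rename_X, MvPolynomial.rename_X, sub_eq_zero] at h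
  have := MvPolynomial.X_injective h
  simp only [Function.update_apply] at this
  grind

variable [Fintype σ]

variable (σ K) in
/-- The product of the differences of the variables, a square root of the discriminant. -/
noncomputable def vandermondeProd : MvPolynomial σ K :=
  ∏ q : σ × σ with q.1 < q.2, (MvPolynomial.X q.2 - MvPolynomial.X q.1)

theorem vandermondeProd_eq_prod_Ioi [LocallyFiniteOrderTop σ] :
    vandermondeProd σ K =
      ∏ i, ∏ j ∈ Finset.Ioi i, (MvPolynomial.X j - MvPolynomial.X i) := by
  rw [vandermondeProd, Finset.prod_filter, Fintype.prod_prod_type]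
  exact Finset.prod_congr rfl fun i _ => by
    rw [← Finset.prod_filter, Finset.filter_lt_eq_Ioi]

variable [LocallyFiniteOrderTop σ] [LocallyFiniteOrderBot σ] in
theorem associated_prod_compl_vandermondeProd_sq :
    Associated (∏ i, ∏ j ∈ {i}ᶜ, (MvPolynomial.X j - MvPolynomial.X i))
      (vandermondeProd σ K ^ 2) := by
  rw [← Finset.prod_prod_Ioi_mul_eq_prod_prod_off_diag, vandermondeProd_eq_prod_Ioi,
    ← Finset.prod_pow]
  simp_rw [← Finset.prod_pow]
  refine Associated.prod _ _ _ fun i _ => Associated.prod _ _ _ fun j _ => ⟨-1, ?_⟩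
  push_cast
  ring

variable [IsDomain K]

theorem vandermondeProd_ne_zero : vandermondeProd σ K ≠ 0 :=
  Finset.prod_ne_zero_iff.2 fun _ hq => (prime_X_sub_X (Finset.mem_filter.1 hq).2.ne').ne_zero

variable {F : MvPolynomial σ K}

theorem vandermondeProd_pow_dvd (m : ℕ)
    (h : ∀ i j : σ, i < j → (MvPolynomial.X j - MvPolynomial.X i) ^ m ∣ F) :
    vandermondeProd σ K ^ m ∣ F := by
  rw [vandermondeProd, ← Finset.prod_pow]
  refine prod_pow_dvd_of_prime m ?_ ?_ ?_ <;> simp only [Finset.mem_filter_univ]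
  · exact fun q hq => prime_X_sub_X hq.ne'
  · exact fun q hq r hr hqr => eq_of_X_sub_X_dvd_X_sub_X hq hr hqr
  · exact fun q hq => h q.1 q.2 hq

theorem vandermondeProd_sq_dvd (h2 : (2 : K) ≠ 0) (hF : F.IsSymmetric)
    (h : ∀ i j : σ, i < j → MvPolynomial.X j - MvPolynomial.X i ∣ F) :
    vandermondeProd σ K ^ 2 ∣ F :=
  vandermondeProd_pow_dvd 2 fun i j hij => X_sub_X_dvd_sq h2 hij.ne' hF (h i j hij)

theorem X_sub_X_dvd_of_dvd_mul_pderiv (h2 : (2 : K) ≠ 0) {i j : σ} (hij : i < j)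
    (h : vandermondeProd σ K ^ 2 ∣ F * pderiv j (vandermondeProd σ K ^ 2)) :
    MvPolynomial.X j - MvPolynomial.X i ∣ F := by
  have hmem : (i, j) ∈ ({q | q.1 < q.2} : Finset (σ × σ)) := by simpa
  have hp : Prime (MvPolynomial.X j - MvPolynomial.X i : MvPolynomial σ K) :=
    prime_X_sub_X hij.ne'
  rw [vandermondeProd, ← Finset.mul_prod_erase _ _ hmem] at h
  refine dvd_of_mul_sq_dvd_mul_derivation (pderiv j) hp (not_X_sub_X_dvd_two h2) ?_ ?_ h
  · refine hp.not_dvd_finsetProd fun q hq hdvd => ?_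
    simp only [Finset.mem_erase, Finset.mem_filter_univ] at hq
    exact hq.1 (eq_of_X_sub_X_dvd_X_sub_X hij hq.2 hdvd).symm
  · rw [map_sub, MvPolynomial.pderiv_X_self, MvPolynomial.pderiv_X_of_ne hij.ne, sub_zero]
    exact fun h => hp.not_isUnit (isUnit_of_dvd_one h)

end VandermondeProduct

section RootSubstitution

variable {n : ℕ} {K : Type*} [CommRing K]

variable (n K) in
/-- The substitution of the elementary symmetric polynomials for the coefficients of the universal
monic polynomial, i.e. the passage from coefficients to (negated) roots. -/
noncomputable def esymmHom : MvPolynomial (Fin n) K →ₐ[K] MvPolynomial (Fin n) K :=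
  (MvPolynomial.symmetricSubalgebra (Fin n) K).val.comp (MvPolynomial.esymmAlgHom (Fin n) K n)

theorem esymmHom_apply (F : MvPolynomial (Fin n) K) :
    esymmHom n K F = MvPolynomial.aeval
      (fun i : Fin n => MvPolynomial.esymm (Fin n) K (i + 1)) F :=
  MvPolynomial.esymmAlgHom_apply F

theorem esymmHom_injective : Function.Injective (esymmHom n K) :=
  Subtype.val_injective.comp (MvPolynomial.esymmAlgHom_injective K (Fintype.card_fin n).ge)

theorem isSymmetric_esymmHom (F : MvPolynomial (Fin n) K) : (esymmHom n K F).IsSymmetric :=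
  (MvPolynomial.esymmAlgHom (Fin n) K n F).2

theorem exists_esymmHom_eq {F : MvPolynomial (Fin n) K} (hF : F.IsSymmetric) :
    ∃ G, esymmHom n K G = F := by
  obtain ⟨G, hG⟩ := MvPolynomial.esymmAlgHom_surjective K (Fintype.card_fin n).le ⟨F, hF⟩
  exact ⟨G, congrArg Subtype.val hG⟩

variable [IsDomain K]

theorem esymmHom_dvd_iff {F G : MvPolynomial (Fin n) K} :
    esymmHom n K F ∣ esymmHom n K G ↔ F ∣ G := by
  refine ⟨?_, map_dvd _⟩
  rintro ⟨H, hH⟩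
  rcases eq_or_ne F 0 with rfl | hF
  · rw [map_zero, zero_mul, map_eq_zero_iff _ esymmHom_injective] at hH
    exact zero_dvd_iff.2 hH
  · have hF' : esymmHom n K F ≠ 0 := (map_ne_zero_iff _ esymmHom_injective).2 hF
    have hHsymm : H.IsSymmetric := fun e => mul_left_cancel₀ hF' <| by
      rw [← hH, ← isSymmetric_esymmHom G e, hH, map_mul, isSymmetric_esymmHom F e]
    obtain ⟨H, rfl⟩ := exists_esymmHom_eq hHsymm
    exact ⟨H, esymmHom_injective (by rw [hH, map_mul])⟩

theorem associated_of_associated_esymmHom {F G : MvPolynomial (Fin n) K}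
    (h : Associated (esymmHom n K F) (esymmHom n K G)) : Associated F G :=
  associated_of_dvd_dvd (esymmHom_dvd_iff.1 h.dvd) (esymmHom_dvd_iff.1 h.symm.dvd)

variable {Δ c : MvPolynomial (Fin n) K}

theorem dvd_of_forall_X_sub_X_dvd_esymmHom (h2 : (2 : K) ≠ 0)
    (hΔ : Associated (esymmHom n K Δ) (vandermondeProd (Fin n) K ^ 2))
    (h : ∀ i j : Fin n, i < j → MvPolynomial.X j - MvPolynomial.X i ∣ esymmHom n K c) : Δ ∣ c :=
  esymmHom_dvd_iff.1 <|
    hΔ.dvd.trans (vandermondeProd_sq_dvd h2 (isSymmetric_esymmHom c) h)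

theorem dvd_of_forall_dvd_mul_pderiv (h2 : (2 : K) ≠ 0)
    (hΔ : Associated (esymmHom n K Δ) (vandermondeProd (Fin n) K ^ 2))
    (h : ∀ k, Δ ∣ c * pderiv k Δ) : Δ ∣ c := by
  refine dvd_of_forall_X_sub_X_dvd_esymmHom h2 hΔ fun i j hij => ?_
  refine X_sub_X_dvd_of_dvd_mul_pderiv h2 hij (dvd_mul_derivation_of_associated _ hΔ ?_)
  have hchain := derivation_aeval (pderiv j)
    (fun i : Fin n => MvPolynomial.esymm (Fin n) K (i + 1)) Δ
  simp only [← esymmHom_apply] at hchain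
  rw [hchain, Finset.mul_sum]
  refine Finset.dvd_sum fun k _ => ?_
  rw [← mul_assoc, ← map_mul]
  exact (_root_.map_dvd (esymmHom n K) (h k)).mul_right _

end RootSubstitution

section UniversalPolynomial

variable {n : ℕ} {K : Type*} [CommRing K]

variable (n K) in
/-- The universal monic polynomial `t ^ n + a₁ t ^ (n - 1) + ⋯ + aₙ`, where the variable `X i` of
the coefficient ring stands for `a_{i + 1}`, the coefficient of `t ^ i.rev`. -/
noncomputable def univPoly : (MvPolynomial (Fin n) K)[X] :=
  X ^ n + ∑ i : Fin n, C (MvPolynomial.X i) * X ^ (i.rev : ℕ)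

theorem degree_sum_C_mul_X_pow_rev_lt {R : Type*} [CommRing R] (c : Fin n → R) :
    (∑ i : Fin n, C (c i) * X ^ (i.rev : ℕ)).degree < (n : WithBot ℕ) :=
  mem_degreeLT.1 <| Submodule.sum_mem _ fun (i : Fin n) _ => mem_degreeLT.2 <|
    (degree_C_mul_X_pow_le _ _).trans_lt (Nat.cast_lt.2 i.rev.isLt)

theorem univPoly_monic : (univPoly n K).Monic :=
  monic_X_pow_add (degree_sum_C_mul_X_pow_rev_lt _)

theorem natDegree_univPoly [Nontrivial K] : (univPoly n K).natDegree = n := by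
  rw [univPoly, natDegree_add_eq_left_of_degree_lt, natDegree_X_pow]
  rw [degree_X_pow]
  exact degree_sum_C_mul_X_pow_rev_lt _

theorem map_esymmHom_univPoly :
    (univPoly n K).map (esymmHom n K : MvPolynomial (Fin n) K →+* MvPolynomial (Fin n) K) =
      ∏ i : Fin n, (X + C (MvPolynomial.X i)) := by
  rw [MvPolynomial.prod_C_add_X_eq_sum_esymm, Finset.sum_range_succ', univPoly, add_comm]
  simp only [Polynomial.map_add, Polynomial.map_sum, Polynomial.map_mul, map_C, Polynomial.map_pow,
    map_X, Fintype.card_fin]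
  rw [Finset.sum_range]
  congr 1
  · refine Finset.sum_congr rfl fun i _ => ?_
    simp [esymmHom_apply, Fin.val_rev]
  · simp

/-- Evaluation at the `i`-th root `-X i` of the universal polynomial. -/
noncomputable def rootEval (i : Fin n) : (MvPolynomial (Fin n) K)[X] →+* MvPolynomial (Fin n) K :=
  eval₂RingHom (esymmHom n K : MvPolynomial (Fin n) K →+* MvPolynomial (Fin n) K)
    (-MvPolynomial.X i)

theorem rootEval_C (i : Fin n) (c : MvPolynomial (Fin n) K) :
    rootEval i (C c) = esymmHom n K c :=
  eval₂_C _ _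

theorem rootEval_X (i : Fin n) :
    rootEval i (X : (MvPolynomial (Fin n) K)[X]) = -MvPolynomial.X i :=
  eval₂_X _ _

theorem rootEval_eq_eval_map (i : Fin n) (f : (MvPolynomial (Fin n) K)[X]) :
    rootEval i f = (f.map (esymmHom n K : MvPolynomial (Fin n) K →+* MvPolynomial (Fin n) K)).eval
      (-MvPolynomial.X i) :=
  eval₂_eq_eval_map _

theorem rootEval_univPoly (i : Fin n) : rootEval i (univPoly n K) = 0 := by
  rw [rootEval_eq_eval_map, map_esymmHom_univPoly, eval_prod]
  exact Finset.prod_eq_zero (Finset.mem_univ i) (by simp)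

theorem rootEval_modByMonic (i : Fin n) (f : (MvPolynomial (Fin n) K)[X]) :
    rootEval i (f %ₘ univPoly n K) = rootEval i f := by
  rw [modByMonic_eq_sub_mul_div, map_sub, map_mul, rootEval_univPoly, zero_mul, sub_zero]

theorem rootEval_derivative_univPoly (i : Fin n) :
    rootEval i (derivative (univPoly n K)) =
      ∏ j ∈ {i}ᶜ, (MvPolynomial.X j - MvPolynomial.X i) := by
  let root : Fin n → MvPolynomial (Fin n) K := fun j => -MvPolynomial.X j
  have hnodal : ∏ j : Fin n, (X + C (MvPolynomial.X j)) = Lagrange.nodal Finset.univ root := by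
    simp [Lagrange.nodal, root]
  rw [rootEval_eq_eval_map, ← derivative_map, map_esymmHom_univPoly, hnodal]
  refine (Lagrange.eval_nodal_derivative_eval_node_eq (v := root) (Finset.mem_univ i)).trans ?_
  rw [Lagrange.eval_nodal, Finset.compl_singleton]
  exact Finset.prod_congr rfl fun j _ => neg_sub_neg _ _

theorem X_sub_X_dvd_esymmHom_of_C_mem_span {c : MvPolynomial (Fin n) K} {i j : Fin n} (hij : i ≠ j)
    (hc : C c ∈ Ideal.span {univPoly n K, derivative (univPoly n K)}) :
    MvPolynomial.X j - MvPolynomial.X i ∣ esymmHom n K c := by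
  obtain ⟨a, b, hab⟩ := Ideal.mem_span_pair.1 hc
  rw [← rootEval_C i, ← hab, map_add, map_mul, map_mul, rootEval_univPoly,
    rootEval_derivative_univPoly, mul_zero, zero_add]
  exact (Finset.dvd_prod_of_mem _ (by simpa using hij.symm)).mul_left _

end UniversalPolynomial

section Resultant

variable {R : Type} [CommRing R]

/-- The permutation of `Fin (l + m)` that reverses the first `l` and the last `m` indices
separately. It matches the order of the rows of `sylvesterMatrix`, by decreasing shift, with that
of the columns of `Polynomial.sylvester`. -/
def blockRevPerm (l m : ℕ) : Equiv.Perm (Fin (l + m)) :=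
  (finSumFinEquiv.symm.trans (Equiv.sumCongr Fin.revPerm Fin.revPerm)).trans finSumFinEquiv

theorem sylvester_eq_submatrix_sylvesterMatrix (p q : R[X]) (m l : ℕ) :
    sylvester q p l m =
      (sylvesterMatrix p q m l).transpose.submatrix Fin.revPerm (blockRevPerm l m) := by
  ext i j
  induction j using Fin.addCases with
  | left j =>
    simp only [sylvester, Matrix.of_apply, Fin.addCases_left, Matrix.submatrix_apply,
      Matrix.transpose_apply, sylvesterMatrix, blockRevPerm, Set.mem_Icc, Equiv.trans_apply,
      finSumFinEquiv_symm_apply_castAdd, Equiv.sumCongr_apply, Sum.map_inl,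
      finSumFinEquiv_apply_left, Fin.revPerm_apply, Fin.val_castAdd, Fin.val_rev]
    grind
  | right j =>
    simp only [sylvester, Matrix.of_apply, Fin.addCases_right, Matrix.submatrix_apply,
      Matrix.transpose_apply, sylvesterMatrix, blockRevPerm, Set.mem_Icc, Equiv.trans_apply,
      finSumFinEquiv_symm_apply_natAdd, Equiv.sumCongr_apply, Sum.map_inr,
      finSumFinEquiv_apply_right, Fin.revPerm_apply, Fin.val_natAdd, Fin.val_rev]
    grind

theorem associated_det_submatrix_perm {ι A : Type*} [Fintype ι] [DecidableEq ι] [CommRing A]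
    (M : Matrix ι ι A) (e f : Equiv.Perm ι) : Associated M.det (M.submatrix e f).det := by
  have h : M.submatrix e f = (M.submatrix e id).submatrix id f := rfl
  rw [h, Matrix.det_permute', Matrix.det_permute, ← mul_assoc]
  exact associated_unit_mul_right _ _
    (((Units.isUnit _).map (Int.castRingHom A)).mul ((Units.isUnit _).map (Int.castRingHom A)))

theorem associated_resultant (p q : R[X]) (m l : ℕ) :
    Associated (_root_.resultant p q m l) (Polynomial.resultant p q m l) := by
  rw [resultant_comm, Polynomial.resultant, sylvester_eq_submatrix_sylvesterMatrix,
    _root_.resultant, ← Matrix.det_transpose]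
  exact (associated_det_submatrix_perm _ _ _).trans
    (associated_unit_mul_right _ _ (isUnit_one.neg.pow _))

end Resultant

section Discriminant

variable {n : ℕ}

theorem esymmHom_resultant_univPoly {K : Type*} [CommRing K] [Nontrivial K] :
    esymmHom n K (Polynomial.resultant (univPoly n K) (derivative (univPoly n K)) n (n - 1)) =
      ∏ i, ∏ j ∈ {i}ᶜ, (MvPolynomial.X j - MvPolynomial.X i) := by
  let φ : MvPolynomial (Fin n) K →+* MvPolynomial (Fin n) K := esymmHom n K
  have hdeg : ((univPoly n K).map φ).natDegree = n := by
    rw [univPoly_monic.natDegree_map, natDegree_univPoly]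
  have hdeg' : ((derivative (univPoly n K)).map φ).natDegree ≤ n - 1 :=
    natDegree_map_le.trans ((natDegree_derivative_le _).trans_eq (by rw [natDegree_univPoly]))
  have hprod := resultant_prod_left Finset.univ
    (fun i : Fin n => X + C (MvPolynomial.X i : MvPolynomial (Fin n) K))
    ((derivative (univPoly n K)).map φ) (n - 1) (by simp) hdeg'
  rw [← map_esymmHom_univPoly, hdeg, resultant_map_map] at hprod
  refine hprod.trans (Finset.prod_congr rfl fun i _ => ?_)
  rw [natDegree_X_add_C, resultant_X_add_C_left _ _ _ hdeg', ← rootEval_eq_eval_map,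
    rootEval_derivative_univPoly]

variable {K : Type} [CommRing K]

variable (n K) in
/-- The discriminant of the universal monic polynomial. -/
noncomputable def univDiscr : MvPolynomial (Fin n) K :=
  _root_.resultant (univPoly n K) (derivative (univPoly n K)) n (n - 1)

theorem associated_esymmHom_univDiscr [Nontrivial K] :
    Associated (esymmHom n K (univDiscr n K))
      (∏ i, ∏ j ∈ {i}ᶜ, (MvPolynomial.X j - MvPolynomial.X i)) :=
  esymmHom_resultant_univPoly (n := n) (K := K) ▸
    (associated_resultant _ _ _ _).map (esymmHom n K)

theorem C_univDiscr_mem_span [Nontrivial K] (hn : n ≠ 0) :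
    C (univDiscr n K) ∈ Ideal.span {univPoly n K, derivative (univPoly n K)} := by
  obtain ⟨a, b, -, -, hab⟩ := exists_mul_add_mul_eq_C_resultant (univPoly n K)
    (derivative (univPoly n K)) natDegree_univPoly.le
    ((natDegree_derivative_le _).trans_eq (by rw [natDegree_univPoly])) (Or.inl hn)
  obtain ⟨u, hu⟩ := (associated_resultant (univPoly n K) (derivative (univPoly n K)) n (n - 1)).symm
  rw [univDiscr, ← hu, C_mul, ← hab]
  refine Ideal.mul_mem_right _ _ (Ideal.mem_span_pair.2 ⟨a, b, ?_⟩)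
  ring

variable [IsDomain K]

theorem associated_esymmHom_univDiscr_vandermondeProd_sq :
    Associated (esymmHom n K (univDiscr n K)) (vandermondeProd (Fin n) K ^ 2) :=
  associated_esymmHom_univDiscr.trans associated_prod_compl_vandermondeProd_sq

theorem univDiscr_ne_zero : univDiscr n K ≠ 0 := by
  rw [← map_ne_zero_iff _ (esymmHom_injective (n := n) (K := K)),
    associated_esymmHom_univDiscr_vandermondeProd_sq.ne_zero_iff]
  exact pow_ne_zero 2 vandermondeProd_ne_zero

theorem univDiscr_dvd_of_C_mem_span (h2 : (2 : K) ≠ 0) {c : MvPolynomial (Fin n) K}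
    (hc : C c ∈ Ideal.span {univPoly n K, derivative (univPoly n K)}) : univDiscr n K ∣ c :=
  dvd_of_forall_X_sub_X_dvd_esymmHom h2 associated_esymmHom_univDiscr_vandermondeProd_sq
    fun _ _ hij => X_sub_X_dvd_esymmHom_of_C_mem_span hij.ne hc

end Discriminant

section PolynomialDerivation

variable {K A : Type*} [CommRing K] [CommRing A] [Algebra K A]

theorem derivation_mem_span (D : Derivation K A A) {s : Set A}
    (hs : ∀ a ∈ s, D a ∈ Ideal.span s) {a : A} (ha : a ∈ Ideal.span s) : D a ∈ Ideal.span s := by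
  induction ha using Submodule.span_induction with
  | mem a ha => exact hs a ha
  | zero => rw [map_zero]; exact zero_mem _
  | add a b _ _ ha hb => rw [map_add]; exact add_mem ha hb
  | smul c a ha hDa =>
    rw [smul_eq_mul, D.leibniz, smul_eq_mul, smul_eq_mul]
    exact add_mem (Ideal.mul_mem_left _ c hDa) (Ideal.mul_mem_right _ _ ha)

/-- The action of a derivation on the coefficients of polynomials. -/
noncomputable def coeffDerivation (θ : Derivation K A A) : Derivation K A[X] A[X] :=
  PolynomialModule.equivPolynomialSelf.compDer θ.mapCoeffs

theorem coeff_coeffDerivation (θ : Derivation K A A) (f : A[X]) (k : ℕ) :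
    (coeffDerivation θ f).coeff k = θ (f.coeff k) :=
  rfl

theorem coeffDerivation_C (θ : Derivation K A A) (a : A) : coeffDerivation θ (C a) = C (θ a) := by
  ext k
  simp [coeff_coeffDerivation, coeff_C, apply_ite θ]

theorem coeffDerivation_X_pow (θ : Derivation K A A) (m : ℕ) :
    coeffDerivation θ (X ^ m) = 0 := by
  ext k
  rw [coeff_coeffDerivation, coeff_X_pow, apply_ite θ, θ.map_one_eq_zero, map_zero, ite_self,
    coeff_zero]

theorem coeffDerivation_derivative (θ : Derivation K A A) (f : A[X]) :
    coeffDerivation θ (derivative f) = derivative (coeffDerivation θ f) := by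
  ext k
  simp [coeff_coeffDerivation, coeff_derivative, mul_comm]

theorem C_derivation_mem_span (θ : Derivation K A A) {P g q : A[X]}
    (hθ : coeffDerivation θ P = derivative P * g - P * q) {c : A}
    (hc : C c ∈ Ideal.span {P, derivative P}) : C (θ c) ∈ Ideal.span {P, derivative P} := by
  let D : Derivation K A[X] A[X] := coeffDerivation θ - g • derivative'.restrictScalars K
  have hD (f : A[X]) : D f = coeffDerivation θ f - g * derivative f := rfl
  have hDC : D (C c) = C (θ c) := by
    rw [hD, coeffDerivation_C, derivative_C, mul_zero, sub_zero]
  rw [← hDC]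
  refine derivation_mem_span D (fun f hf => Ideal.mem_span_pair.2 ?_) hc
  rcases hf with rfl | rfl
  · exact ⟨-q, 0, by rw [hD, hθ]; ring⟩
  · refine ⟨-derivative q, derivative g - q, ?_⟩
    rw [hD, coeffDerivation_derivative, hθ]
    simp only [derivative_sub, derivative_mul]
    ring

end PolynomialDerivation

section TangentDerivation

variable {n : ℕ}

theorem sum_C_coeff_rev_mul_X_pow_rev {R : Type*} [CommRing R] {f : R[X]}
    (hf : f.degree < (n : WithBot ℕ)) :
    ∑ i : Fin n, C (f.coeff (i.rev : ℕ)) * X ^ (i.rev : ℕ) = f := by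
  calc ∑ i : Fin n, C (f.coeff (i.rev : ℕ)) * X ^ (i.rev : ℕ)
      = ∑ i : Fin n, C (f.coeff (i : ℕ)) * X ^ (i : ℕ) :=
        Equiv.sum_comp Fin.revPerm fun i : Fin n => C (f.coeff (i : ℕ)) * X ^ (i : ℕ)
    _ = f := by
        simp_rw [C_mul_X_pow_eq_monomial]
        exact sum_fin (fun k a => monomial k a) (fun _ => monomial_zero_right _) hf |>.trans
          (sum_monomial_eq f)

variable {K : Type*} [CommRing K]

/-- The vector field on the space of monic polynomials induced by the vector field `-g ∂ₜ` on the
line: it moves the universal polynomial `P` in the direction `P' g mod P`. -/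
noncomputable def tangentDerivation (g : (MvPolynomial (Fin n) K)[X]) :
    Derivation K (MvPolynomial (Fin n) K) (MvPolynomial (Fin n) K) :=
  MvPolynomial.mkDerivation K fun i =>
    ((derivative (univPoly n K) * g) %ₘ univPoly n K).coeff (i.rev : ℕ)

variable [Nontrivial K]

theorem sum_C_tangentDerivation_X_mul_X_pow_rev (g : (MvPolynomial (Fin n) K)[X]) :
    ∑ i : Fin n, C (tangentDerivation g (MvPolynomial.X i)) * X ^ (i.rev : ℕ) =
      (derivative (univPoly n K) * g) %ₘ univPoly n K := by
  simp only [tangentDerivation, MvPolynomial.mkDerivation_X]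
  refine sum_C_coeff_rev_mul_X_pow_rev ?_
  refine (degree_modByMonic_lt _ univPoly_monic).trans_eq ?_
  rw [degree_eq_natDegree univPoly_monic.ne_zero, natDegree_univPoly]

theorem coeffDerivation_tangentDerivation_univPoly (g : (MvPolynomial (Fin n) K)[X]) :
    coeffDerivation (tangentDerivation g) (univPoly n K) =
      (derivative (univPoly n K) * g) %ₘ univPoly n K := by
  rw [← sum_C_tangentDerivation_X_mul_X_pow_rev, univPoly, map_add, map_sum,
    coeffDerivation_X_pow, zero_add]
  refine Finset.sum_congr rfl fun i _ => ?_
  rw [Derivation.leibniz, coeffDerivation_X_pow, smul_zero, zero_add, coeffDerivation_C,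
    smul_eq_mul, mul_comm]

end TangentDerivation

section TangentFrame

variable {n : ℕ} {K : Type*} [CommRing K]

variable (n K) in
/-- The vector fields `tangentDerivation (t ^ (n - 1 - j))`, the images of a basis of the
tautological module `R[t] / (P)`. -/
noncomputable def tangentFrame :
    Fin n → Derivation K (MvPolynomial (Fin n) K) (MvPolynomial (Fin n) K) :=
  fun j => tangentDerivation (X ^ (j.rev : ℕ))

theorem det_projVandermonde_neg_X :
    (Matrix.projVandermonde 1 fun i : Fin n => -(MvPolynomial.X i : MvPolynomial (Fin n) K)).det =
      vandermondeProd (Fin n) K := by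
  rw [Matrix.det_projVandermonde, vandermondeProd_eq_prod_Ioi]
  refine Finset.prod_congr rfl fun i _ => Finset.prod_congr rfl fun j _ => ?_
  rw [Pi.one_apply, Pi.one_apply, one_mul, one_mul, neg_sub_neg]

theorem projVandermonde_mul_map_saitoMatrix [Nontrivial K] :
    (Matrix.projVandermonde 1 fun i : Fin n => -(MvPolynomial.X i : MvPolynomial (Fin n) K)) *
        (saitoMatrix (tangentFrame n K)).map (esymmHom n K) =
      Matrix.diagonal (fun i => ∏ j ∈ {i}ᶜ, (MvPolynomial.X j - MvPolynomial.X i)) *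
        Matrix.projVandermonde 1 fun i => -MvPolynomial.X i := by
  refine Matrix.ext fun i j => ?_
  have hroot := congrArg (rootEval i)
    (sum_C_tangentDerivation_X_mul_X_pow_rev (n := n) (K := K) (X ^ (j.rev : ℕ)))
  rw [rootEval_modByMonic, map_mul, rootEval_derivative_univPoly, map_pow, rootEval_X,
    map_sum] at hroot
  simp only [map_mul, map_pow, rootEval_X, rootEval_C] at hroot
  rw [Matrix.diagonal_mul, Matrix.mul_apply]
  simpa [Matrix.projVandermonde_apply, saitoMatrix, tangentFrame, mul_comm] using hroot

theorem esymmHom_det_saitoMatrix_tangentFrame [IsDomain K] :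
    esymmHom n K (saitoMatrix (tangentFrame n K)).det =
      ∏ i, ∏ j ∈ {i}ᶜ, (MvPolynomial.X j - MvPolynomial.X i) := by
  have hdet := congrArg Matrix.det (projVandermonde_mul_map_saitoMatrix (n := n) (K := K))
  rw [Matrix.det_mul, Matrix.det_mul, Matrix.det_diagonal, det_projVandermonde_neg_X,
    mul_comm] at hdet
  rw [AlgHom.map_det]
  exact mul_right_cancel₀ vandermondeProd_ne_zero hdet

end TangentFrame

section Freeness

variable {n : ℕ} {K : Type} [CommRing K] [IsDomain K]

theorem associated_det_saitoMatrix_tangentFrame :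
    Associated (saitoMatrix (tangentFrame n K)).det (univDiscr n K) := by
  refine associated_of_associated_esymmHom ?_
  rw [esymmHom_det_saitoMatrix_tangentFrame]
  exact associated_esymmHom_univDiscr.symm

theorem linearIndependent_tangentFrame :
    LinearIndependent (MvPolynomial (Fin n) K) (tangentFrame n K) :=
  linearIndependent_of_det_saitoMatrix_ne_zero <|
    associated_det_saitoMatrix_tangentFrame.ne_zero_iff.2 univDiscr_ne_zero

theorem tangentDerivation_mem_logDerivation (h2 : (2 : K) ≠ 0) (hn : n ≠ 0)
    (g : (MvPolynomial (Fin n) K)[X]) :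
    tangentDerivation g ∈ logDerivation K (univDiscr n K) := by
  rw [mem_logDerivation]
  refine univDiscr_dvd_of_C_mem_span h2 (C_derivation_mem_span _ (g := g)
    (q := (derivative (univPoly n K) * g) /ₘ univPoly n K) ?_ (C_univDiscr_mem_span hn))
  rw [coeffDerivation_tangentDerivation_univPoly]
  exact modByMonic_eq_sub_mul_div _ _

theorem span_range_tangentFrame_eq_logDerivation (h2 : (2 : K) ≠ 0) (hn : n ≠ 0) :
    Submodule.span (MvPolynomial (Fin n) K) (Set.range (tangentFrame n K)) =
      logDerivation K (univDiscr n K) :=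
  span_range_eq_logDerivation univDiscr_ne_zero
    (fun _ => dvd_of_forall_dvd_mul_pderiv h2 associated_esymmHom_univDiscr_vandermondeProd_sq)
    (fun _ => tangentDerivation_mem_logDerivation h2 hn _)
    associated_det_saitoMatrix_tangentFrame

end Freeness

end FreeDivisor

theorem stmt_5_general {K : Type} [CommRing K] [IsDomain K] (h2 : (2 : K) ≠ 0) (n : ℕ)
    (hn : 1 ≤ n) (P : Polynomial (MvPolynomial (Fin n) K))
    (hP : P = X ^ n + ∑ i : Fin n,
      C (MvPolynomial.X i) * X ^ (n - 1 - (i : ℕ)))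
    (Δ : MvPolynomial (Fin n) K)
    (hΔ : Δ = _root_.resultant P (derivative P) n (n - 1)) :
    ∃ N : Submodule (MvPolynomial (Fin n) K)
        (Derivation K (MvPolynomial (Fin n) K) (MvPolynomial (Fin n) K)),
      (∀ θ : Derivation K (MvPolynomial (Fin n) K) (MvPolynomial (Fin n) K),
        θ ∈ N ↔ θ Δ ∈ Ideal.span ({Δ} : Set (MvPolynomial (Fin n) K))) ∧
      Module.Free (MvPolynomial (Fin n) K) N ∧
      Module.finrank (MvPolynomial (Fin n) K) N = n := by
  have hP' : P = FreeDivisor.univPoly n K := by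
    simp_rw [hP, FreeDivisor.univPoly, Fin.val_rev, Nat.sub_sub, add_comm 1]
  have hΔ' : Δ = FreeDivisor.univDiscr n K := by rw [hΔ, hP', FreeDivisor.univDiscr]
  have hindep := FreeDivisor.linearIndependent_tangentFrame (n := n) (K := K)
  refine ⟨FreeDivisor.logDerivation K Δ,
    fun _ => FreeDivisor.mem_logDerivation.trans Ideal.mem_span_singleton.symm, ?_⟩
  rw [hΔ', ← FreeDivisor.span_range_tangentFrame_eq_logDerivation h2 (Nat.ne_of_gt hn)]
  exact ⟨.of_basis (Module.Basis.span hindep), by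
    rw [finrank_span_eq_card hindep, Fintype.card_fin]⟩

/-- curve analogue of Theorem B, Remark 2.3.4.
Let `R = ℂ[a₁,…,aₙ]`, let `P = tⁿ + a₁ t^{n-1} + … + aₙ ∈ R[t]` be the universal
monic polynomial of degree `n`, and let `Δ = Res(P, ∂P/∂t) ∈ R` be its discriminant.
Then the set of ℂ-linear derivations `θ` of `R` with `θ(Δ) ∈ (Δ)` is an `R`-submodule
of the derivations which is free of rank `n`. -/
theorem stmt_5 (n : ℕ) (hn : 1 ≤ n)
    (P : Polynomial (MvPolynomial (Fin n) ℂ))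
    (hP : P = X ^ n + ∑ i : Fin n,
      C (MvPolynomial.X i) * X ^ (n - 1 - (i : ℕ)))
    (Δ : MvPolynomial (Fin n) ℂ)
    (hΔ : Δ = _root_.resultant P (derivative P) n (n - 1)) :
    ∃ N : Submodule (MvPolynomial (Fin n) ℂ)
        (Derivation ℂ (MvPolynomial (Fin n) ℂ) (MvPolynomial (Fin n) ℂ)),
      (∀ θ : Derivation ℂ (MvPolynomial (Fin n) ℂ) (MvPolynomial (Fin n) ℂ),
        θ ∈ N ↔ θ Δ ∈ Ideal.span ({Δ} : Set (MvPolynomial (Fin n) ℂ))) ∧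
      Module.Free (MvPolynomial (Fin n) ℂ) N ∧
      Module.finrank (MvPolynomial (Fin n) ℂ) N = n :=
  stmt_5_general two_ne_zero n hn P hP Δ hΔ
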